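/- Let (X_n) be a random walk in periodic environment on Z^d. Suppose the induced Markov chain ξ_n on the torus T is irreducible and aperiodic, and that Σ_{y∈Z^d} |y| p_x(y) < ∞ for every x ∈ T. Then X_n / n converges almost surely, as n → ∞, to the vector ν := Σ_{x∈T} π(x) Σ_{y∈Z^d} p_x(y) y. -/

import Mathlib

open MeasureTheory Filter Topology ProbabilityTheory

noncomputable section

/-- The torus `T = ℤ^d / (M₁ℤ × ⋯ × M_dℤ)`. -/
abbrev Torus (d : ℕ) (Md : Fin d → ℕ) : Type := ∀ i : Fin d, ZMod (Md i)

/-- Projection of `ℤ^d` onto the torus, `x ↦ x mod M`. -/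
def projT {d : ℕ} (Md : Fin d → ℕ) (x : Fin d → ℤ) : Torus d Md :=
  fun i => (x i : ZMod (Md i))

/-- A canonical representative in `ℤ^d` of a point of the torus. -/
def repT {d : ℕ} (Md : Fin d → ℕ) [∀ i, NeZero (Md i)] (t : Torus d Md) : Fin d → ℤ :=
  fun i => ((t i).val : ℤ)

/-- `p` is a periodic environment on `ℤ^d`: each `p x` is a probability distribution
on `ℤ^d` (the jump distribution at `x`), and `x ↦ p x` is `M`-periodic. -/
def IsPeriodicEnv {d : ℕ} (Md : Fin d → ℕ) (p : (Fin d → ℤ) → (Fin d → ℤ) → ℝ) : Prop :=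
  (∀ x y, 0 ≤ p x y) ∧ (∀ x, HasSum (p x) 1) ∧
    ∀ (x y : Fin d → ℤ) (i : Fin d), p (x + Pi.single i (Md i : ℤ)) y = p x y

/-- The transition matrix of the induced Markov chain on the torus:
`P a b = ∑_{z : ℤ^d, a + z ∼ b} p_a(z)` (the jump `z` leads from the class `a`
to the class `b` iff `a + (z mod M) = b`). -/
def indMatrix {d : ℕ} (Md : Fin d → ℕ) [∀ i, NeZero (Md i)]
    (p : (Fin d → ℤ) → (Fin d → ℤ) → ℝ) : Matrix (Torus d Md) (Torus d Md) ℝ :=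
  Matrix.of fun a b => ∑' z : Fin d → ℤ, if a + projT Md z = b then p (repT Md a) z else 0

/-- Irreducibility of a finite-state transition matrix: every state can be reached
from every state with positive probability in finitely many (positively many) steps. -/
def MatIrreducible {T : Type*} [Fintype T] [DecidableEq T] (P : Matrix T T ℝ) : Prop :=
  ∀ a b : T, ∃ n : ℕ, 0 < n ∧ 0 < (P ^ n) a b

/-- Aperiodicity of a finite-state transition matrix: for every state, the gcd of
the possible return times is `1`. -/
def MatAperiodic {T : Type*} [Fintype T] [DecidableEq T] (P : Matrix T T ℝ) : Prop :=
  ∀ a : T, ∀ m : ℕ, (∀ n : ℕ, 0 < n → 0 < (P ^ n) a a → m ∣ n) → m = 1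

/-- `π` is a stationary probability distribution for the transition matrix `P`. -/
def IsStationaryDist {T : Type*} [Fintype T] (P : Matrix T T ℝ) (π : T → ℝ) : Prop :=
  (∀ a, 0 ≤ π a) ∧ (∑ a, π a = 1) ∧ ∀ b, ∑ a, π a * P a b = π b

/-- The drift vector `ν = ∑_{x ∈ T} π(x) ∑_{y ∈ ℤ^d} p_x(y) y`. -/
def driftVec {d : ℕ} (Md : Fin d → ℕ) [∀ i, NeZero (Md i)]
    (p : (Fin d → ℤ) → (Fin d → ℤ) → ℝ) (π : Torus d Md → ℝ) : Fin d → ℝ :=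
  fun i => ∑ a : Torus d Md, π a * ∑' y : Fin d → ℤ, p (repT Md a) y * (y i : ℝ)

/-- `μ` is the law of the random walk in the environment `p` started at `x₀`,
as a probability measure on trajectory space: the probability of every cylinder set
is the corresponding product of one-step transition probabilities. -/
def IsRWPELaw {d : ℕ} (p : (Fin d → ℤ) → (Fin d → ℤ) → ℝ) (x₀ : Fin d → ℤ)
    (μ : Measure (ℕ → (Fin d → ℤ))) : Prop :=
  IsProbabilityMeasure μ ∧
    ∀ (n : ℕ) (x : ℕ → (Fin d → ℤ)),
      μ {ω | ∀ i ≤ n, ω i = x i} =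
        ENNReal.ofReal ((if x 0 = x₀ then (1 : ℝ) else 0) *
          ∏ i ∈ Finset.range n, p (x i) (x (i + 1) - x i))

/-- `e` is one of the `2d` unit vectors of `ℤ^d`. -/
def IsUnitVec {d : ℕ} (e : Fin d → ℤ) : Prop :=
  ∃ i : Fin d, e = Pi.single i 1 ∨ e = -Pi.single i 1

/-- The environment is nearest neighbour: only jumps to nearest neighbours have
positive probability. -/
def IsNearestNeighbour {d : ℕ} (p : (Fin d → ℤ) → (Fin d → ℤ) → ℝ) : Prop :=
  ∀ x y, p x y ≠ 0 → IsUnitVec y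

/-- The average negative gradient `g` of the potential,
`g_i = (1/M_i) ∑_{j=0}^{M_i - 1} log (p_{j eᵢ}(eᵢ) / p_{(j+1) eᵢ}(-eᵢ))`. -/
def avgNegGrad {d : ℕ} (Md : Fin d → ℕ) (p : (Fin d → ℤ) → (Fin d → ℤ) → ℝ) :
    Fin d → ℝ :=
  fun i => (Md i : ℝ)⁻¹ * ∑ j ∈ Finset.range (Md i),
    Real.log (p (Pi.single i (j : ℤ)) (Pi.single i 1) /
      p (Pi.single i ((j : ℤ) + 1)) (-Pi.single i 1))

/-- The conditional expected jump `μ_{xy}` of the walk, given that the induced chain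
jumps from `x` to `y`. -/
def condJump {d : ℕ} (Md : Fin d → ℕ) [∀ i, NeZero (Md i)]
    (p : (Fin d → ℤ) → (Fin d → ℤ) → ℝ) (a b : Torus d Md) : Fin d → ℝ :=
  if indMatrix Md p a b = 0 then 0
  else fun i =>
    (∑' z : Fin d → ℤ, if a + projT Md z = b then p (repT Md a) z * (z i : ℝ) else 0) /
      indMatrix Md p a b

/-!
Attach to each point `t` of the torus an independent stack of i.i.d. jumps with law `p t`. The walk
that always takes the next unused jump of the stack at its current class has the law of the RWPE,
because distinct times use distinct entries of the stacks. Outside one null set the strong law of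
large numbers holds along every stack, both for the jumps and for the classes they lead to, and the
rest is deterministic. Among the departures from `t`, the fraction leading to `b` tends to `P t b`,
while `b` is entered as often as it is left, up to one; so every limit point of the visit
frequencies is invariant under `P`, and by compactness and uniqueness they tend to `π`. Summing the
jumps stack by stack gives `Xₙ / n → ∑ t, π t • ∑ y, p t y • y`.
-/

open Finset Asymptotics
open scoped Matrix

section Stationary

variable {T : Type*} [Fintype T]

theorem vecMul_pow_eq_of_vecMul_eq {R : Type*} [Semiring R] [DecidableEq T] {P : Matrix T T R}
    {v : T → R} (hv : v ᵥ* P = v) (n : ℕ) : v ᵥ* P ^ n = v := by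
  induction n with
  | zero => rw [pow_zero, Matrix.vecMul_one]
  | succ n ih => rw [pow_succ, ← Matrix.vecMul_vecMul, ih, hv]

theorem MatIrreducible.eq_zero_of_vecMul_eq [DecidableEq T] {P : Matrix T T ℝ}
    (hirr : MatIrreducible P) (hP : ∀ a b, 0 ≤ P a b) {v : T → ℝ} (hv : ∀ a, 0 ≤ v a)
    (hvP : v ᵥ* P = v) {b : T} (hb : v b = 0) : v = 0 := by
  ext a
  obtain ⟨n, -, hn⟩ := hirr a b
  have hsum : ∑ a, v a * (P ^ n) a b = 0 :=
    (congrFun (vecMul_pow_eq_of_vecMul_eq hvP n) b).trans hb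
  have hterm : v a * (P ^ n) a b = 0 :=
    (sum_eq_zero_iff_of_nonneg fun c _ =>
      mul_nonneg (hv c) (Matrix.pow_apply_nonneg hP n c b)).1 hsum a (mem_univ a)
  exact (mul_eq_zero.1 hterm).resolve_right hn.ne'

theorem MatIrreducible.pos_of_isStationaryDist [DecidableEq T] {P : Matrix T T ℝ}
    (hirr : MatIrreducible P) (hP : ∀ a b, 0 ≤ P a b) {π : T → ℝ} (hπ : IsStationaryDist P π)
    (a : T) : 0 < π a := by
  refine (hπ.1 a).lt_of_ne' fun ha => ?_
  have hzero : π = 0 := hirr.eq_zero_of_vecMul_eq hP hπ.1 (funext hπ.2.2) ha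
  simpa [hzero] using hπ.2.1

-- Subtract from `ρ` the largest multiple of `π` that keeps it nonnegative: the difference is
-- invariant and vanishes somewhere, hence everywhere.
theorem MatIrreducible.isStationaryDist_unique [DecidableEq T] {P : Matrix T T ℝ}
    (hirr : MatIrreducible P) (hP : ∀ a b, 0 ≤ P a b) {ρ π : T → ℝ}
    (hρ : IsStationaryDist P ρ) (hπ : IsStationaryDist P π) : ρ = π := by
  have hpos := hirr.pos_of_isStationaryDist hP hπ
  have : Nonempty T := by
    by_contra! hT
    simpa using hπ.2.1
  obtain ⟨b, hb⟩ := Finite.exists_min fun a => ρ a / π a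
  set k := ρ b / π b
  have hdiff : ρ - k • π = 0 := by
    refine hirr.eq_zero_of_vecMul_eq hP (fun a => ?_) ?_ (b := b) ?_
    · simpa using (le_div_iff₀ (hpos a)).1 (hb a)
    · rw [Matrix.sub_vecMul, Matrix.smul_vecMul]
      exact congrArg₂ (fun u v => u - k • v) (funext hρ.2.2) (funext hπ.2.2)
    · simp [k, (hpos b).ne']
  have hρk : ρ = k • π := sub_eq_zero.1 hdiff
  have hk : k = 1 := by
    have hmass := hρ.2.1
    simpa [hρk, ← mul_sum, hπ.2.1] using hmass
  rw [hρk, hk, one_smul]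

theorem tendsto_of_unique_isStationaryDist {P : Matrix T T ℝ} {π : T → ℝ}
    (hπ : ∀ ρ, IsStationaryDist P ρ → ρ = π) {ι : Type*} {l : Filter ι} {f : ι → T → ℝ}
    (hf : ∀ᶠ i in l, f i ∈ stdSimplex ℝ T) (hfP : Tendsto (fun i => f i ᵥ* P - f i) l (𝓝 0)) :
    Tendsto f l (𝓝 π) := by
  refine (isCompact_stdSimplex ℝ T).tendsto_nhds_of_unique_mapClusterPt hf fun ρ hρ hcluster =>
    hπ ρ ⟨hρ.1, hρ.2, fun b => ?_⟩
  have hcont : Continuous fun g : T → ℝ => g ᵥ* P - g := by fun_prop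
  have hdefect : MapClusterPt (ρ ᵥ* P - ρ) l fun i => f i ᵥ* P - f i :=
    hcluster.continuousAt_comp hcont.continuousAt
  have hinv : ρ ᵥ* P - ρ = 0 := by
    by_contra hne
    exact hne (eq_of_nhds_neBot (hdefect.clusterPt.mono hfP))
  exact congrFun (sub_eq_zero.1 hinv) b

end Stationary

section Averages

variable {E : Type*} [SeminormedAddCommGroup E]

theorem isLittleO_natCast_comp_of_le {r : ℕ → E} (hr : r =o[atTop] fun n => (n : ℝ))
    {N : ℕ → ℕ} (hN : ∀ n, N n ≤ n) : (fun n => r (N n)) =o[atTop] fun n => (n : ℝ) := by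
  refine isLittleO_iff.2 fun ε hε => ?_
  obtain ⟨K, hK⟩ := eventually_atTop.1 (isLittleO_iff.1 hr (half_pos hε))
  have hbound (m : ℕ) : ‖r m‖ ≤ ε / 2 * m + ∑ k ∈ range K, ‖r k‖ := by
    rcases lt_or_ge m K with hm | hm
    · have hle : ‖r m‖ ≤ ∑ k ∈ range K, ‖r k‖ :=
        single_le_sum (f := fun k => ‖r k‖) (fun _ _ => norm_nonneg _) (mem_range.2 hm)
      exact hle.trans (le_add_of_nonneg_left (by positivity))
    · have hle := hK m hm
      rw [Real.norm_natCast] at hle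
      exact hle.trans (le_add_of_nonneg_right (by positivity))
  have hlarge : ∀ᶠ n : ℕ in atTop, ∑ k ∈ range K, ‖r k‖ ≤ ε / 2 * n :=
    (tendsto_natCast_atTop_atTop.const_mul_atTop (half_pos hε)).eventually_ge_atTop _
  filter_upwards [hlarge] with n hn
  have hNn : (N n : ℝ) ≤ n := mod_cast hN n
  calc ‖r (N n)‖ ≤ ε / 2 * N n + ∑ k ∈ range K, ‖r k‖ := hbound (N n)
    _ ≤ ε / 2 * n + ε / 2 * n := by gcongr
    _ = ε * ‖(n : ℝ)‖ := by rw [Real.norm_natCast]; ring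

variable [NormedSpace ℝ E]

theorem tendsto_inv_smul_sum_range_comp_of_le {u : ℕ → E} {m : E}
    (hu : Tendsto (fun n : ℕ => (n : ℝ)⁻¹ • ∑ j ∈ range n, u j) atTop (𝓝 m))
    {N : ℕ → ℕ} (hN : ∀ n, N n ≤ n) :
    Tendsto (fun n : ℕ => (n : ℝ)⁻¹ • ∑ j ∈ range (N n), u j - ((N n : ℝ) / n) • m) atTop
      (𝓝 0) := by
  have hr : (fun n : ℕ => ∑ j ∈ range n, u j - (n : ℝ) • m) =o[atTop] fun n => (n : ℝ) := by
    have hdev : (fun n : ℕ => (n : ℝ)⁻¹ • ∑ j ∈ range n, u j - m) =o[atTop] fun _ => (1 : ℝ) :=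
      (isLittleO_one_iff ℝ).2 (by simpa using hu.sub_const m)
    refine ((isBigO_refl (fun n : ℕ => (n : ℝ)) atTop).smul_isLittleO hdev).congr
      (fun n => ?_) fun n => by simp
    rcases eq_or_ne n 0 with rfl | hn
    · simp
    · rw [smul_sub, smul_inv_smul₀ (Nat.cast_ne_zero.2 hn)]
  refine (isLittleO_natCast_comp_of_le hr hN).tendsto_inv_smul_nhds_zero.congr fun n => ?_
  rw [smul_sub, smul_smul, div_eq_inv_mul]

end Averages

section Stacks

variable {T : Type*} [DecidableEq T]

/-- The number of visits of the path `ξ` to `t` before time `n`. -/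
def visits (ξ : ℕ → T) (t : T) (n : ℕ) : ℕ :=
  Nat.count (ξ · = t) n

/-- Attach to every point `t` a stack with entries `(t, 0), (t, 1), …`, and let a path `ξ` take
the next unused entry of the stack at its current position. `stackIndex ξ n` is the entry taken at
time `n`. -/
def stackIndex (ξ : ℕ → T) (n : ℕ) : T × ℕ :=
  (ξ n, visits ξ (ξ n) n)

theorem visits_le (ξ : ℕ → T) (t : T) (n : ℕ) : visits ξ t n ≤ n :=
  Nat.count_le _

theorem visits_succ (ξ : ℕ → T) (t : T) (n : ℕ) :
    visits ξ t (n + 1) = visits ξ t n + if ξ n = t then 1 else 0 :=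
  Nat.count_succ _ n

theorem stackIndex_injective (ξ : ℕ → T) : Function.Injective (stackIndex ξ) := by
  intro m n hmn
  obtain ⟨hpos, hcount⟩ : ξ m = ξ n ∧ visits ξ (ξ m) m = visits ξ (ξ n) n := Prod.ext_iff.1 hmn
  rw [hpos] at hcount
  exact Nat.count_injective (p := (ξ · = ξ n)) hpos rfl hcount

theorem abs_sum_range_ite_succ_sub_visits_le (ξ : ℕ → T) (b : T) (n : ℕ) :
    |∑ k ∈ range n, (if ξ (k + 1) = b then (1 : ℝ) else 0) - visits ξ b n| ≤ 1 := by
  have hvisits : (visits ξ b n : ℝ) = ∑ k ∈ range n, if ξ k = b then (1 : ℝ) else 0 := by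
    rw [visits, Nat.count_eq_card_filter_range, sum_boole]
  rw [hvisits, ← sum_sub_distrib, sum_range_sub fun k => if ξ k = b then (1 : ℝ) else 0]
  split_ifs <;> norm_num

variable [Fintype T]

theorem sum_range_stackIndex {A : Type*} [AddCommMonoid A] (G : T × ℕ → A) (ξ : ℕ → T) (n : ℕ) :
    ∑ k ∈ range n, G (stackIndex ξ k) = ∑ t, ∑ j ∈ range (visits ξ t n), G (t, j) := by
  induction n with
  | zero => simp [visits]
  | succ n ih =>
    have hstack (t : T) : ∑ j ∈ range (visits ξ t (n + 1)), G (t, j) =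
        ∑ j ∈ range (visits ξ t n), G (t, j) + if ξ n = t then G (stackIndex ξ n) else 0 := by
      rw [visits_succ]
      split_ifs with ht
      · rw [sum_range_succ, stackIndex, ht]
      · simp
    rw [sum_range_succ, ih, sum_congr rfl fun t _ => hstack t, sum_add_distrib, sum_ite_eq]
    simp

theorem sum_visits (ξ : ℕ → T) (n : ℕ) : ∑ t, visits ξ t n = n := by
  have hcount := sum_range_stackIndex (fun _ => (1 : ℕ)) ξ n
  simpa using hcount.symm

theorem visits_div_mem_stdSimplex (ξ : ℕ → T) {n : ℕ} (hn : n ≠ 0) :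
    (fun t => (visits ξ t n : ℝ) / n) ∈ stdSimplex ℝ T := by
  refine ⟨fun t => by positivity, ?_⟩
  rw [← sum_div, ← Nat.cast_sum, sum_visits, div_self (Nat.cast_ne_zero.2 hn)]

variable {E : Type*} [SeminormedAddCommGroup E] [NormedSpace ℝ E]

theorem tendsto_inv_smul_sum_stackIndex_sub {G : T × ℕ → E} {m : T → E}
    (hG : ∀ t, Tendsto (fun n : ℕ => (n : ℝ)⁻¹ • ∑ j ∈ range n, G (t, j)) atTop (𝓝 (m t)))
    (ξ : ℕ → T) :
    Tendsto (fun n : ℕ => (n : ℝ)⁻¹ • ∑ k ∈ range n, G (stackIndex ξ k) -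
      ∑ t, ((visits ξ t n : ℝ) / n) • m t) atTop (𝓝 0) := by
  have hstack := tendsto_finsetSum univ fun t _ =>
    tendsto_inv_smul_sum_range_comp_of_le (hG t) (visits_le ξ t)
  rw [sum_const_zero] at hstack
  refine hstack.congr fun n => ?_
  rw [sum_sub_distrib, sum_range_stackIndex, smul_sum]

theorem tendsto_visits_div {P : Matrix T T ℝ} {π : T → ℝ}
    (hπ : ∀ ρ, IsStationaryDist P ρ → ρ = π) {V : T × ℕ → T}
    (hV : ∀ t b, Tendsto
      (fun n : ℕ => (n : ℝ)⁻¹ • ∑ j ∈ range n, if V (t, j) = b then (1 : ℝ) else 0)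
      atTop (𝓝 (P t b)))
    {ξ : ℕ → T} (hξ : ∀ k, ξ (k + 1) = V (stackIndex ξ k)) (t : T) :
    Tendsto (fun n : ℕ => (visits ξ t n : ℝ) / n) atTop (𝓝 (π t)) := by
  refine tendsto_pi_nhds.1 (tendsto_of_unique_isStationaryDist hπ
    (f := fun n t => (visits ξ t n : ℝ) / n) ?_ (tendsto_pi_nhds.2 fun b => ?_)) t
  · exact (eventually_ne_atTop 0).mono fun n hn => visits_div_mem_stdSimplex ξ hn
  have hjumps := tendsto_inv_smul_sum_stackIndex_sub
    (G := fun k => if V k = b then (1 : ℝ) else 0) (hV · b) ξ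
  have hboundary : Tendsto (fun n : ℕ => (n : ℝ)⁻¹ *
      (∑ k ∈ range n, (if ξ (k + 1) = b then (1 : ℝ) else 0) - visits ξ b n)) atTop (𝓝 0) :=
    tendsto_inv_atTop_nhds_zero_nat.zero_mul_isBoundedUnder_le
      (isBoundedUnder_of ⟨1, fun n => abs_sum_range_ite_succ_sub_visits_le ξ b n⟩)
  have hdefect := hboundary.sub hjumps
  rw [sub_zero] at hdefect
  refine hdefect.congr fun n => ?_
  simp only [hξ, Pi.sub_apply, Matrix.vecMul, dotProduct, smul_eq_mul]
  ring

theorem tendsto_inv_smul_sum_stackIndex {π : T → ℝ} {ξ : ℕ → T}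
    (hξ : ∀ t, Tendsto (fun n : ℕ => (visits ξ t n : ℝ) / n) atTop (𝓝 (π t)))
    {G : T × ℕ → E} {m : T → E}
    (hG : ∀ t, Tendsto (fun n : ℕ => (n : ℝ)⁻¹ • ∑ j ∈ range n, G (t, j)) atTop (𝓝 (m t))) :
    Tendsto (fun n : ℕ => (n : ℝ)⁻¹ • ∑ k ∈ range n, G (stackIndex ξ k)) atTop
      (𝓝 (∑ t, π t • m t)) := by
  have hfreq := tendsto_finsetSum univ fun t _ => (hξ t).smul_const (m t)
  simpa using (tendsto_inv_smul_sum_stackIndex_sub hG ξ).add hfreq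

end Stacks

section StackWalk

variable {S T : Type*} [DecidableEq T]

/-- The walk on `S` started at `x₀` whose jump at each time is the next unused entry of the stack
`U (t, ·)`, where `t` is the class under `c` of the current position, together with the number of
entries used so far in each stack. -/
def stackState [Add S] (c : S → T) (x₀ : S) (U : T × ℕ → S) : ℕ → S × (T → ℕ)
  | 0 => (x₀, 0)
  | n + 1 =>
    let s := stackState c x₀ U n
    (s.1 + U (c s.1, s.2 (c s.1)), s.2 + Pi.single (c s.1) 1)

/-- The trajectory of the walk driven by the stacks `U`. -/
def stackWalk [Add S] (c : S → T) (x₀ : S) (U : T × ℕ → S) (n : ℕ) : S :=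
  (stackState c x₀ U n).1

theorem stackState_snd [Add S] (c : S → T) (x₀ : S) (U : T × ℕ → S) (n : ℕ) (t : T) :
    (stackState c x₀ U n).2 t = visits (c ∘ stackWalk c x₀ U) t n := by
  induction n with
  | zero => simp [stackState, visits]
  | succ n ih =>
    rw [visits_succ, ← ih]
    simp [stackState, stackWalk, Pi.single_apply, eq_comm]

theorem stackWalk_succ [Add S] (c : S → T) (x₀ : S) (U : T × ℕ → S) (n : ℕ) :
    stackWalk c x₀ U (n + 1) =
      stackWalk c x₀ U n + U (stackIndex (c ∘ stackWalk c x₀ U) n) := by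
  rw [stackIndex, ← stackState_snd]
  rfl

theorem map_stackWalk [AddZeroClass S] {A : Type*} [AddCommMonoid A] (φ : S →+ A) (c : S → T)
    (x₀ : S) (U : T × ℕ → S) (n : ℕ) :
    φ (stackWalk c x₀ U n) =
      φ x₀ + ∑ k ∈ range n, φ (U (stackIndex (c ∘ stackWalk c x₀ U) k)) := by
  induction n with
  | zero => simp [stackWalk, stackState]
  | succ n ih => rw [stackWalk_succ, map_add, ih, sum_range_succ, add_assoc]

theorem stackIndex_congr {ξ η : ℕ → T} {n : ℕ} (h : ∀ i ≤ n, ξ i = η i) :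
    stackIndex ξ n = stackIndex η n := by
  have hvisits : visits ξ (η n) n = visits η (η n) n := by
    simp only [visits, Nat.count_eq_card_filter_range]
    congr 1
    exact filter_congr fun i hi => by rw [h i (mem_range.1 hi).le]
  rw [stackIndex, stackIndex, h n le_rfl, hvisits]

theorem forall_stackWalk_eq_iff [AddCommGroup S] (c : S → T) (x₀ : S) (U : T × ℕ → S) (x : ℕ → S)
    (n : ℕ) :
    (∀ i ≤ n, stackWalk c x₀ U i = x i) ↔
      x 0 = x₀ ∧ ∀ i < n, U (stackIndex (c ∘ x) i) = x (i + 1) - x i := by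
  induction n with
  | zero => simp [stackWalk, stackState, eq_comm]
  | succ n ih =>
    have hsplit : (∀ i ≤ n + 1, stackWalk c x₀ U i = x i) ↔
        (∀ i ≤ n, stackWalk c x₀ U i = x i) ∧ stackWalk c x₀ U (n + 1) = x (n + 1) := by
      simp only [← Nat.lt_add_one_iff, Nat.forall_lt_succ_right (n := n + 1)]
    rw [hsplit, Nat.forall_lt_succ_right, ← and_assoc, ← ih]
    refine and_congr_right fun h => ?_
    have hindex : stackIndex (c ∘ stackWalk c x₀ U) n = stackIndex (c ∘ x) n :=
      stackIndex_congr fun i hi => congrArg c (h i hi)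
    rw [stackWalk_succ, h n le_rfl, hindex, eq_sub_iff_add_eq']

theorem measurable_stackState [Add S] [MeasurableSpace S] [Countable S]
    [MeasurableSingletonClass S] [Finite T] (c : S → T) (x₀ : S) (n : ℕ) :
    Measurable fun U => stackState c x₀ U n := by
  induction n with
  | zero => exact measurable_const
  | succ n ih =>
    let next (q : (S × (T → ℕ)) × (T × ℕ → S)) : S × (T → ℕ) :=
      (q.1.1 + q.2 (c q.1.1, q.1.2 (c q.1.1)), q.1.2 + Pi.single (c q.1.1) 1)
    have hnext : Measurable next := measurable_from_prod_countable_right fun s =>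
      ((measurable_of_countable (s.1 + ·)).comp (measurable_pi_apply (c s.1, s.2 (c s.1)))).prodMk
        (measurable_const (a := s.2 + Pi.single (c s.1) 1))
    exact hnext.comp (ih.prodMk measurable_id)

theorem measurable_stackWalk [Add S] [MeasurableSpace S] [Countable S]
    [MeasurableSingletonClass S] [Finite T] (c : S → T) (x₀ : S) :
    Measurable (stackWalk c x₀) :=
  measurable_pi_lambda _ fun n => (measurable_stackState c x₀ n).fst

end StackWalk

section RandomStacks

variable {S T : Type*} [MeasurableSpace S]

/-- The law of independent stacks of jumps, the entries of the stack at `t` having law `ν t`. -/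
def stackMeasure (ν : T → Measure S) : Measure (T × ℕ → S) :=
  Measure.infinitePi fun k => ν k.1

instance (ν : T → Measure S) [∀ t, IsProbabilityMeasure (ν t)] :
    IsProbabilityMeasure (stackMeasure ν) :=
  inferInstanceAs (IsProbabilityMeasure (Measure.infinitePi _))

theorem ae_tendsto_stack_average {E : Type*} [NormedAddCommGroup E] [NormedSpace ℝ E]
    [CompleteSpace E] [MeasurableSpace E] [BorelSpace E] (ν : T → Measure S)
    [∀ t, IsProbabilityMeasure (ν t)] {t : T} {F : S → E} (hF : Measurable F)
    (hFν : Integrable F (ν t)) :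
    ∀ᵐ U ∂stackMeasure ν, Tendsto (fun n : ℕ => (n : ℝ)⁻¹ • ∑ j ∈ range n, F (U (t, j))) atTop
      (𝓝 (∫ y, F y ∂ν t)) := by
  have hlaw (j : ℕ) : HasLaw (fun U => U (t, j)) (ν t) (stackMeasure ν) :=
    (measurePreserving_eval_infinitePi (fun k : T × ℕ => ν k.1) (t, j)).hasLaw
  have hindep : iIndepFun (fun (k : T × ℕ) U => F (U k)) (stackMeasure ν) :=
    iIndepFun_infinitePi fun _ => hF
  have hslln := strong_law_ae (μ := stackMeasure ν) (fun j U => F (U (t, j)))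
    ((measurePreserving_eval_infinitePi (fun k : T × ℕ => ν k.1)
      (t, 0)).integrable_comp_of_integrable hFν)
    (fun i j hij => hindep.indepFun (by simpa using hij))
    fun j => ((hlaw j).identDistrib (hlaw 0)).comp hF
  rwa [← (hlaw 0).integral_comp hFν.aestronglyMeasurable]

theorem stackMeasure_cylinder [DecidableEq T] [AddCommGroup S] [MeasurableSingletonClass S]
    (ν : T → Measure S) [∀ t, IsProbabilityMeasure (ν t)] (c : S → T) (x : ℕ → S) (n : ℕ) :
    stackMeasure ν {U | ∀ i ≤ n, stackWalk c (x 0) U i = x i} =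
      ∏ i ∈ range n, ν (c (x i)) {x (i + 1) - x i} := by
  have hcyl : {U : T × ℕ → S | ∀ i ≤ n, stackWalk c (x 0) U i = x i} =
      (fun U i => U (stackIndex (c ∘ x) i)) ⁻¹'
        (range n : Set ℕ).pi fun i => {x (i + 1) - x i} := by
    ext U
    simp [forall_stackWalk_eq_iff]
  rw [hcyl, ← Measure.map_apply (by fun_prop)
    (.pi (Set.to_countable _) fun _ _ => measurableSet_singleton _), stackMeasure,
    Measure.map_infinitePi_infinitePi_of_inj (stackIndex_injective _),
    Measure.infinitePi_pi _ fun _ _ => measurableSet_singleton _]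
  rfl

/-- The transition matrix of the class `c Xₙ ∈ T` when the jump of `X` from a point of class `a`
has law `ν a`. -/
def jumpMatrix [Add T] (c : S → T) (ν : T → Measure S) : Matrix T T ℝ :=
  .of fun a b => (ν a).real {u | a + c u = b}

theorem integral_ite_eq_jumpMatrix [Add T] [DecidableEq T] [DiscreteMeasurableSpace S] (c : S → T)
    (ν : T → Measure S) (a b : T) :
    ∫ u, (if a + c u = b then (1 : ℝ) else 0) ∂ν a = jumpMatrix c ν a b := by
  refine Eq.trans (integral_congr_ae <| .of_forall fun u => ?_)
    (integral_indicator_one (μ := ν a) (s := {u | a + c u = b}) .of_discrete)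
  simp [Set.indicator_apply]

theorem ae_tendsto_stackWalk [AddCommGroup S] [Countable S] [MeasurableSingletonClass S]
    [AddMonoid T] [Fintype T] [DecidableEq T] {E : Type*} [NormedAddCommGroup E] [NormedSpace ℝ E]
    [CompleteSpace E] {ν : T → Measure S} [∀ t, IsProbabilityMeasure (ν t)] (c : S →+ T)
    (φ : S →+ E) (hφ : ∀ t, Integrable φ (ν t)) {π : T → ℝ}
    (hπ : ∀ ρ, IsStationaryDist (jumpMatrix c ν) ρ → ρ = π) (x₀ : S) :
    ∀ᵐ U ∂stackMeasure ν, Tendsto (fun n : ℕ => (n : ℝ)⁻¹ • φ (stackWalk c x₀ U n)) atTop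
      (𝓝 (∑ t, π t • ∫ y, φ y ∂ν t)) := by
  borelize E
  have hclass (t b : T) : ∀ᵐ U ∂stackMeasure ν, Tendsto (fun n : ℕ => (n : ℝ)⁻¹ •
      ∑ j ∈ range n, if t + c (U (t, j)) = b then (1 : ℝ) else 0) atTop
      (𝓝 (jumpMatrix c ν t b)) := by
    rw [← integral_ite_eq_jumpMatrix]
    exact ae_tendsto_stack_average ν (measurable_of_countable _)
      (.of_bound (measurable_of_countable _).aestronglyMeasurable 1 (.of_forall fun u => by
        split_ifs <;> simp))
  have hjump := ae_all_iff.2 fun t =>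
    ae_tendsto_stack_average ν (measurable_of_countable φ) (hφ t)
  filter_upwards [ae_all_iff.2 fun t => ae_all_iff.2 (hclass t), hjump] with U hU hφU
  have hξ (k : ℕ) : (c ∘ stackWalk c x₀ U) (k + 1) =
      (fun i : T × ℕ => i.1 + c (U i)) (stackIndex (c ∘ stackWalk c x₀ U) k) := by
    simp [stackWalk_succ, stackIndex]
  have hfreq := tendsto_visits_div hπ (V := fun i => i.1 + c (U i)) hU hξ
  have hsum := tendsto_inv_smul_sum_stackIndex hfreq (G := fun i => φ (U i)) hφU
  have hstart : Tendsto (fun n : ℕ => (n : ℝ)⁻¹ • φ x₀) atTop (𝓝 0) := by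
    simpa using tendsto_inv_atTop_nhds_zero_nat (𝕜 := ℝ) |>.smul_const (φ x₀)
  simpa [map_stackWalk] using hstart.add hsum

end RandomStacks

theorem measure_ext_of_cylinder {S : Type*} [MeasurableSpace S] [Countable S]
    [MeasurableSingletonClass S] {μ ν : Measure (ℕ → S)} [IsFiniteMeasure μ]
    (h : ∀ (n : ℕ) (x : ℕ → S), μ {ω | ∀ i ≤ n, ω i = x i} = ν {ω | ∀ i ≤ n, ω i = x i}) :
    μ = ν := by
  have hinitial (n : ℕ) : ν.map (Iic n).restrict = μ.map (Iic n).restrict := by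
    refine Measure.ext_of_singleton fun y => ?_
    have hcyl : (Iic n).restrict ⁻¹' ({y} : Set (Iic n → S)) =
        {ω : ℕ → S | ∀ i ≤ n, ω i = y ⟨min i n, mem_Iic.2 (min_le_right i n)⟩} := by
      ext ω
      simp +contextual [funext_iff, Finset.restrict]
    rw [Measure.map_apply (by fun_prop) .of_discrete,
      Measure.map_apply (by fun_prop) .of_discrete, hcyl, h]
  have hproj : IsProjectiveMeasureFamily (α := fun _ : ℕ => S)
      fun I => μ.map fun ω : ℕ → S => I.restrict ω :=
    isProjectiveMeasureFamily_map_restrict (P := μ) (X := fun i (ω : ℕ → S) => ω i) fun i =>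
      (measurable_pi_apply i).aemeasurable
  exact IsProjectiveLimit.unique (fun _ => rfl) ((isProjectiveLimit_nat_iff hproj ν).2 hinitial)

section MassMeasure

variable {S : Type*} [MeasurableSpace S]

/-- The measure on a countable space with point masses `w`; a negative mass counts as `0`. -/
def massMeasure (w : S → ℝ) : Measure S :=
  .sum fun y => ENNReal.ofReal (w y) • .dirac y

theorem isProbabilityMeasure_massMeasure {w : S → ℝ} (hw : ∀ y, 0 ≤ w y) (hsum : HasSum w 1) :
    IsProbabilityMeasure (massMeasure w) :=
  hsum.isProbabilityMeasure_sum_dirac hw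

variable [MeasurableSingletonClass S]

theorem massMeasure_singleton (w : S → ℝ) (y : S) : massMeasure w {y} = ENNReal.ofReal (w y) := by
  rw [massMeasure, Measure.sum_apply _ (measurableSet_singleton y), tsum_eq_single y]
  · simp
  · intro z hz
    simp [hz]

variable [Countable S] {E : Type*} [NormedAddCommGroup E]

theorem integrable_massMeasure {w : S → ℝ} (hw : ∀ y, 0 ≤ w y) {F : S → E}
    (hF : Summable fun y => w y * ‖F y‖) : Integrable F (massMeasure w) :=
  integrable_sum_dirac (fun _ => ENNReal.ofReal_ne_top) <| by
    simpa only [ENNReal.toReal_ofReal (hw _)] using hF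

theorem integral_massMeasure [NormedSpace ℝ E] [FiniteDimensional ℝ E] {w : S → ℝ}
    (hw : ∀ y, 0 ≤ w y) (F : S → E) : ∫ y, F y ∂massMeasure w = ∑' y, w y • F y := by
  rw [massMeasure, integral_sum_dirac fun _ => ENNReal.ofReal_ne_top]
  simp only [ENNReal.toReal_ofReal (hw _)]

end MassMeasure

section RWPE

variable {d : ℕ} {Md : Fin d → ℕ} {p : (Fin d → ℤ) → (Fin d → ℤ) → ℝ}

theorem IsRWPELaw.unique {x₀ : Fin d → ℤ} {μ μ' : Measure (ℕ → Fin d → ℤ)}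
    (hμ : IsRWPELaw p x₀ μ) (hμ' : IsRWPELaw p x₀ μ') : μ = μ' :=
  have := hμ.1
  measure_ext_of_cylinder fun n x => (hμ.2 n x).trans (hμ'.2 n x).symm

theorem IsPeriodicEnv.periodic (henv : IsPeriodicEnv Md p) (k : Fin d → ℤ) :
    Function.Periodic p fun i => k i * Md i := by
  have hper (i : Fin d) : Function.Periodic p (Pi.single i (Md i : ℤ)) := fun x =>
    funext fun y => henv.2.2 x y i
  have hsum : (fun i => k i * (Md i : ℤ)) = ∑ i, k i • Pi.single i (Md i : ℤ) := by
    simp only [← Pi.single_smul, smul_eq_mul]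
    exact (univ_sum_single _).symm
  rw [hsum]
  exact sum_induction _ (Function.Periodic p) (fun _ _ => .add_period) (by simp [Function.Periodic])
    fun i _ => (hper i).zsmul (k i)

variable (Md) in
/-- The projection `projT` onto the torus as a group homomorphism. -/
def projTHom : (Fin d → ℤ) →+ Torus d Md where
  toFun := projT Md
  map_zero' := by ext; simp [projT]
  map_add' x y := by ext; simp [projT]

variable [∀ i, NeZero (Md i)]

theorem IsPeriodicEnv.apply_repT_projT (henv : IsPeriodicEnv Md p) (x : Fin d → ℤ) :
    p (repT Md (projT Md x)) = p x := by
  rw [← henv.periodic (fun i => x i / Md i)]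
  congr 1
  ext i
  simpa only [repT, projT, ZMod.val_intCast, Pi.add_apply] using Int.emod_add_ediv_mul _ _

variable (Md p) in
/-- The law of the jump of the walk from a point of class `t`. -/
def jumpLaw (t : Torus d Md) : Measure (Fin d → ℤ) :=
  massMeasure (p (repT Md t))

theorem IsPeriodicEnv.isProbabilityMeasure_jumpLaw (henv : IsPeriodicEnv Md p) (t : Torus d Md) :
    IsProbabilityMeasure (jumpLaw Md p t) :=
  isProbabilityMeasure_massMeasure (henv.1 _) (henv.2.1 _)

theorem IsPeriodicEnv.indMatrix_nonneg (henv : IsPeriodicEnv Md p) (a b : Torus d Md) :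
    0 ≤ indMatrix Md p a b :=
  tsum_nonneg fun z => by split_ifs <;> simp [henv.1]

theorem IsPeriodicEnv.jumpMatrix_jumpLaw (henv : IsPeriodicEnv Md p) :
    jumpMatrix (projTHom Md) (jumpLaw Md p) = indMatrix Md p := by
  ext a b
  rw [← integral_ite_eq_jumpMatrix, jumpLaw, integral_massMeasure (henv.1 _)]
  simp only [smul_eq_mul, mul_ite, mul_one, mul_zero]
  rfl

theorem IsPeriodicEnv.isRWPELaw_map_stackWalk (henv : IsPeriodicEnv Md p) (x₀ : Fin d → ℤ) :
    IsRWPELaw p x₀ ((stackMeasure (jumpLaw Md p)).map (stackWalk (projTHom Md) x₀)) := by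
  have := henv.isProbabilityMeasure_jumpLaw
  have hmeas := measurable_stackWalk (projTHom Md) x₀
  refine ⟨Measure.isProbabilityMeasure_map hmeas.aemeasurable, fun n x => ?_⟩
  rw [Measure.map_apply hmeas (by measurability)]
  change stackMeasure _ {U | ∀ i ≤ n, stackWalk (projTHom Md) x₀ U i = x i} = _
  split_ifs with hx
  · rw [← hx, stackMeasure_cylinder, one_mul,
      ENNReal.ofReal_prod_of_nonneg fun i _ => henv.1 _ _]
    refine prod_congr rfl fun i _ => ?_
    rw [jumpLaw, massMeasure_singleton]
    exact congrArg ENNReal.ofReal (congrFun (henv.apply_repT_projT _) _)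
  · simp [forall_stackWalk_eq_iff, hx]

/-- The inclusion of the lattice `ℤ^d` into `ℝ^d`. -/
def latticeEmb (d : ℕ) : (Fin d → ℤ) →+ (Fin d → ℝ) :=
  (Int.castAddHom ℝ).compLeft (Fin d)

theorem IsPeriodicEnv.integrable_latticeEmb (henv : IsPeriodicEnv Md p) {t : Torus d Md}
    (hmom : Summable fun y : Fin d → ℤ => p (repT Md t) y * ∑ i, |(y i : ℝ)|) :
    Integrable (latticeEmb d) (jumpLaw Md p t) := by
  refine integrable_massMeasure (henv.1 _) (hmom.of_nonneg_of_le
    (fun y => mul_nonneg (henv.1 _ _) (norm_nonneg _)) fun y =>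
      mul_le_mul_of_nonneg_left ?_ (henv.1 _ _))
  exact (pi_norm_le_iff_of_nonneg (by positivity)).2 fun i =>
    single_le_sum (f := fun i => |(y i : ℝ)|) (fun _ _ => abs_nonneg _) (mem_univ i)

theorem IsPeriodicEnv.sum_smul_integral_latticeEmb (henv : IsPeriodicEnv Md p)
    (hmom : ∀ t, Summable fun y : Fin d → ℤ => p (repT Md t) y * ∑ i, |(y i : ℝ)|)
    (π : Torus d Md → ℝ) :
    ∑ t, π t • ∫ y, latticeEmb d y ∂jumpLaw Md p t = driftVec Md p π := by
  ext i
  simp only [Finset.sum_apply, Pi.smul_apply, driftVec, smul_eq_mul]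
  refine sum_congr rfl fun t _ => ?_
  rw [eval_integral fun i => (henv.integrable_latticeEmb (hmom t)).eval i, jumpLaw,
    integral_massMeasure (henv.1 _)]
  rfl

theorem rwpe_lln_general (henv : IsPeriodicEnv Md p) {π : Torus d Md → ℝ}
    (hπ : ∀ ρ, IsStationaryDist (indMatrix Md p) ρ ↔ ρ = π)
    (hmom : ∀ t : Torus d Md,
      Summable fun y : Fin d → ℤ => p (repT Md t) y * ∑ i, |(y i : ℝ)|)
    {x₀ : Fin d → ℤ} {μ : Measure (ℕ → Fin d → ℤ)} (hμ : IsRWPELaw p x₀ μ) :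
    ∀ᵐ ω ∂μ, Tendsto (fun n : ℕ => fun i : Fin d => (ω n i : ℝ) / n) atTop
      (𝓝 (driftVec Md p π)) := by
  have := henv.isProbabilityMeasure_jumpLaw
  have hunique (ρ) (hρ : IsStationaryDist (jumpMatrix (projTHom Md) (jumpLaw Md p)) ρ) : ρ = π :=
    (hπ ρ).1 (henv.jumpMatrix_jumpLaw ▸ hρ)
  have hmeas (n : ℕ) : Measurable fun (ω : ℕ → Fin d → ℤ) (i : Fin d) => (ω n i : ℝ) / n :=
    (measurable_of_countable fun (y : Fin d → ℤ) (i : Fin d) => (y i : ℝ) / n).comp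
      (measurable_pi_apply n)
  rw [hμ.unique (henv.isRWPELaw_map_stackWalk x₀), ae_map_iff
    (measurable_stackWalk _ x₀).aemeasurable (measurableSet_tendsto _ hmeas)]
  filter_upwards [ae_tendsto_stackWalk (projTHom Md) (latticeEmb d)
    (fun t => henv.integrable_latticeEmb (hmom t)) hunique x₀] with U hU
  rw [henv.sum_smul_integral_latticeEmb hmom] at hU
  refine hU.congr fun n => funext fun i => ?_
  exact (div_eq_inv_mul _ _).symm

end RWPE

/-- **Law of large numbers for RWPE.** If the induced chain on the torus is irreducible
and aperiodic with stationary distribution `π`, and the jump distributions have finite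
first moments, then `Xₙ / n → ν := ∑_{x∈T} π(x) ∑_{y∈ℤ^d} p_x(y) y` almost surely. -/
theorem rwpe_lln (d : ℕ) (hd : 0 < d) (Md : Fin d → ℕ) [∀ i, NeZero (Md i)]
    (p : (Fin d → ℤ) → (Fin d → ℤ) → ℝ) (henv : IsPeriodicEnv Md p)
    (hirr : MatIrreducible (indMatrix Md p)) (haper : MatAperiodic (indMatrix Md p))
    (π : Torus d Md → ℝ) (hπ : IsStationaryDist (indMatrix Md p) π)
    (hmom : ∀ t : Torus d Md,
      Summable (fun y : Fin d → ℤ => p (repT Md t) y * ∑ i, |(y i : ℝ)|))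
    (μ : Measure (ℕ → (Fin d → ℤ))) (hμ : IsRWPELaw p 0 μ) :
    ∀ᵐ ω ∂μ, Tendsto (fun n : ℕ => fun i : Fin d => (ω n i : ℝ) / n) atTop
      (𝓝 (driftVec Md p π)) := by
  exact rwpe_lln_general henv
    (fun ρ => ⟨(hirr.isStationaryDist_unique henv.indMatrix_nonneg · hπ), fun hρ => hρ ▸ hπ⟩)
    hmom hμ
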